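/- Let d ≥ k ≥ 1 be integers, let a ∈ ℝ^d, and let φ : ℝ → ℝ be convex. Let S be a uniformly random subset of {1,…,d} of size k, and let i₁, …, i_k be i.i.d. uniform random indices in {1,…,d} (repetitions allowed). Then E[ φ( Σ_{i∈S} a_i ) ] ≤ E[ φ( Σ_{j=1}^k a_{i_j} ) ]. In particular, for every p ≥ 1 and every c ∈ ℝ, E| Σ_{i∈S} a_i − c |^p ≤ E| Σ_{j=1}^k a_{i_j} − c |^p. -/

import Mathlib

noncomputable section

open scoped BigOperators

namespace KacJL

/-- Number of `k`-subsets containing the range of `f`. -/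
def cnt {d k : ℕ} (f : Fin k → Fin d) : ℕ :=
  (Finset.univ.filter (fun A : Finset (Fin d) => A.card = k ∧ ∀ j, f j ∈ A)).card

/-- Coupling weight. -/
def wt {d k : ℕ} (A : Finset (Fin d)) (f : Fin k → Fin d) : ℝ :=
  if ∀ j, f j ∈ A then ((cnt f : ℕ) : ℝ)⁻¹ else 0

lemma wt_nonneg {d k : ℕ} (A : Finset (Fin d)) (f : Fin k → Fin d) : 0 ≤ wt A f := by
  unfold wt; split_ifs <;> positivity

lemma cnt_pos {d k : ℕ} (hk : k ≤ d) (f : Fin k → Fin d) : 0 < cnt f := by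
  unfold cnt
  rw [Finset.card_pos]
  obtain ⟨A, hA, hc⟩ := Finset.exists_superset_card_eq (s := Finset.univ.image f) (n := k)
    (by simpa using Finset.card_image_le (s := Finset.univ) (f := f)) (by simpa using hk)
  refine ⟨A, ?_⟩
  simp only [Finset.mem_filter, Finset.mem_univ, true_and]
  exact ⟨hc, fun j => hA (Finset.mem_image_of_mem _ (Finset.mem_univ j))⟩

lemma cnt_perm {d k : ℕ} (σ : Equiv.Perm (Fin d)) (f : Fin k → Fin d) :
    cnt (fun j => σ (f j)) = cnt f := by
  unfold cnt
  symm
  refine Finset.card_bij' (fun A _ => A.map σ.toEmbedding)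
    (fun A _ => A.map σ.symm.toEmbedding) ?_ ?_ ?_ ?_
  · intro A hA
    simpa using hA
  · intro A hA
    simp only [Finset.mem_filter, Finset.mem_univ, true_and, Finset.card_map] at hA ⊢
    refine ⟨hA.1, fun j => ?_⟩
    rw [Finset.mem_map]
    exact ⟨_, hA.2 j, by simp⟩
  · intro A _
    ext x; simp
  · intro A _
    ext x; simp

lemma wt_perm {d k : ℕ} (σ : Equiv.Perm (Fin d)) (A : Finset (Fin d)) (f : Fin k → Fin d) :
    wt (A.map σ.toEmbedding) (fun j => σ (f j)) = wt A f := by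
  unfold wt
  rw [cnt_perm]
  simp

/-- Sums over functions are invariant under post-composition with a permutation. -/
lemma sum_perm {d k : ℕ} (σ : Equiv.Perm (Fin d)) (F : (Fin k → Fin d) → ℝ) :
    ∑ f : Fin k → Fin d, F (fun j => σ (f j)) = ∑ f, F f :=
  Equiv.sum_comp (Equiv.arrowCongr (Equiv.refl (Fin k)) σ) F

lemma exists_perm {d : ℕ} (A B : Finset (Fin d)) (h : A.card = B.card) :
    ∃ σ : Equiv.Perm (Fin d), A.map σ.toEmbedding = B := by
  let e : {x // x ∈ A} ≃ {x // x ∈ B} := Finset.equivOfCardEq h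
  refine ⟨e.extendSubtype, ?_⟩
  apply Finset.eq_of_subset_of_card_le
  · intro x hx
    rw [Finset.mem_map] at hx
    obtain ⟨y, hy, rfl⟩ := hx
    exact e.extendSubtype_mem y hy
  · simp [h]

lemma tot_eq {d k : ℕ} (A B : Finset (Fin d)) (h : A.card = B.card) :
    ∑ f : Fin k → Fin d, wt A f = ∑ f : Fin k → Fin d, wt B f := by
  obtain ⟨σ, rfl⟩ := exists_perm A B h
  rw [← sum_perm σ (fun f => wt (A.map σ.toEmbedding) f)]
  simp only [wt_perm]

lemma sum_wt {d k : ℕ} (hk : k ≤ d) (f : Fin k → Fin d) :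
    ∑ A ∈ Finset.univ.filter (fun A : Finset (Fin d) => A.card = k), wt A f = 1 := by
  unfold wt
  rw [← Finset.sum_filter, Finset.filter_filter, Finset.sum_const, nsmul_eq_mul]
  have := cnt_pos hk f
  change ((cnt f : ℕ) : ℝ) * _ = 1
  exact mul_inv_cancel₀ (by positivity)

lemma tot_val {d k : ℕ} (hk : k ≤ d) (A : Finset (Fin d)) (hA : A.card = k) :
    (d.choose k : ℝ) * ∑ f : Fin k → Fin d, wt A f = (d : ℝ) ^ k := by
  have h1 : ∑ B ∈ Finset.univ.filter (fun B : Finset (Fin d) => B.card = k),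
      ∑ f : Fin k → Fin d, wt B f = (d : ℝ) ^ k := by
    rw [Finset.sum_comm]
    rw [Finset.sum_congr rfl (fun f _ => sum_wt hk f)]
    simp
  rw [← h1, Finset.sum_congr (s₁ := Finset.univ.filter (fun B : Finset (Fin d) => B.card = k))
    rfl (g := fun _ => ∑ f : Fin k → Fin d, wt A f)]
  · rw [Finset.sum_const, nsmul_eq_mul]
    congr 2
    have := Finset.card_powersetCard k (Finset.univ : Finset (Fin d))
    rw [Finset.card_univ, Fintype.card_fin] at this
    rw [← this]
    congr 1
    ext B; simp [Finset.mem_powersetCard]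
  · intro B hB
    apply tot_eq
    simp at hB
    omega

/-- Expected multiplicity of `i`. -/
def mult {d : ℕ} (k : ℕ) (A : Finset (Fin d)) (i : Fin d) : ℝ :=
  ∑ f : Fin k → Fin d, wt A f * ∑ j, if f j = i then 1 else 0

lemma mult_eq {d k : ℕ} (A : Finset (Fin d)) (i i' : Fin d) (hi : i ∈ A) (hi' : i' ∈ A) :
    mult k A i = mult k A i' := by
  have hA : A.map (Equiv.swap i i').toEmbedding = A := by
    apply Finset.eq_of_subset_of_card_le
    · intro x hx
      rw [Finset.mem_map] at hx
      obtain ⟨y, hy, rfl⟩ := hx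
      simp only [Equiv.coe_toEmbedding, Equiv.swap_apply_def]
      split_ifs <;> assumption
    · simp
  unfold mult
  rw [← sum_perm (Equiv.swap i i') (fun f => wt A f * ∑ j, if f j = i' then 1 else 0)]
  refine Finset.sum_congr rfl fun f _ => ?_
  have h := wt_perm (Equiv.swap i i') A f
  rw [hA] at h
  rw [h]
  congr 1
  refine Finset.sum_congr rfl fun j _ => ?_
  have : Equiv.swap i i' (f j) = i' ↔ f j = i := by
    rw [Equiv.swap_apply_eq_iff, Equiv.swap_apply_right]
  simp only [this]

lemma wsum_eq {d k : ℕ} (A : Finset (Fin d)) (a : Fin d → ℝ) :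
    ∑ f : Fin k → Fin d, wt A f * ∑ j, a (f j) = ∑ i ∈ A, mult k A i * a i := by
  unfold mult
  simp only [Finset.sum_mul]
  rw [Finset.sum_comm]
  refine Finset.sum_congr rfl fun f _ => ?_
  by_cases h : ∀ j, f j ∈ A
  · simp only [mul_assoc]
    rw [← Finset.mul_sum]
    congr 1
    simp only [Finset.sum_mul]
    rw [Finset.sum_comm]
    refine Finset.sum_congr rfl fun j _ => ?_
    simp [h j]
  · simp [wt, h]

lemma mult_val {d k : ℕ} (hk : 1 ≤ k) (A : Finset (Fin d)) (hA : A.card = k) (i : Fin d)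
    (hi : i ∈ A) : mult k A i = ∑ f : Fin k → Fin d, wt A f := by
  have h := wsum_eq (k := k) A (fun _ => 1)
  rw [Finset.sum_congr (s₁ := A) rfl (g := fun _ => mult k A i)
    (fun i' hi' => by rw [mul_one]; exact mult_eq A i' i hi' hi)] at h
  simp only [Finset.sum_const, Finset.card_univ, Fintype.card_fin, nsmul_eq_mul, hA, mul_one] at h
  rw [← Finset.sum_mul] at h
  have hk' : (k : ℝ) ≠ 0 := by positivity
  apply mul_left_cancel₀ hk'
  linarith

lemma main_ineq (d k : ℕ) (hk₁ : 1 ≤ k) (hk₂ : k ≤ d) (a : Fin d → ℝ)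
    (φ : ℝ → ℝ) (hφ : ConvexOn ℝ Set.univ φ) :
    (((d.choose k : ℕ) : ℝ))⁻¹ *
        ∑ A ∈ Finset.univ.filter (fun A : Finset (Fin d) => A.card = k),
          φ (∑ i ∈ A, a i) ≤
      (((d : ℝ) ^ k))⁻¹ * ∑ f : Fin k → Fin d, φ (∑ j, a (f j)) := by
  have hc : (0 : ℝ) < d.choose k := by exact_mod_cast Nat.choose_pos hk₂
  have hd : (0 : ℝ) < (d : ℝ) ^ k := by
    have : 0 < d := by omega
    positivity
  have key : ∀ A ∈ Finset.univ.filter (fun A : Finset (Fin d) => A.card = k),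
      φ (∑ i ∈ A, a i) ≤ ((d.choose k : ℝ) / (d : ℝ) ^ k) *
        ∑ f : Fin k → Fin d, wt A f * φ (∑ j, a (f j)) := by
    intro A hA
    have hA : A.card = k := by simpa using hA
    have hW := tot_val hk₂ A hA
    set r : ℝ := (d.choose k : ℝ) / (d : ℝ) ^ k with hr
    have hr0 : 0 < r := by positivity
    have hrW : r * ∑ f : Fin k → Fin d, wt A f = 1 := by
      rw [hr, div_mul_eq_mul_div, hW, div_self hd.ne']
    have J := hφ.map_sum_le (t := Finset.univ) (w := fun f : Fin k → Fin d => r * wt A f)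
      (p := fun f => ∑ j, a (f j)) (fun f _ => mul_nonneg hr0.le (wt_nonneg A f))
      (by rw [← Finset.mul_sum, hrW]) (fun _ _ => Set.mem_univ _)
    simp only [smul_eq_mul, mul_assoc] at J
    rw [← Finset.mul_sum, ← Finset.mul_sum, wsum_eq,
      Finset.sum_congr rfl (fun i hi => by rw [mult_val hk₁ A hA i hi]),
      ← Finset.mul_sum, ← mul_assoc, hrW, one_mul] at J
    exact J
  have h2 := Finset.sum_le_sum key
  rw [← Finset.mul_sum, Finset.sum_comm] at h2
  simp only [← Finset.sum_mul, sum_wt hk₂, one_mul] at h2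
  calc _ ≤ _ := mul_le_mul_of_nonneg_left h2 (inv_nonneg.mpr hc.le)
    _ = _ := by field_simp

lemma convex_abs_pow (p : ℝ) (hp : 1 ≤ p) (c : ℝ) :
    ConvexOn ℝ Set.univ (fun x : ℝ => |x - c| ^ p) := by
  refine ⟨convex_univ, fun x _ y _ s t hs ht hst => ?_⟩
  have h := (convexOn_rpow hp).2 (Set.mem_Ici.mpr (abs_nonneg (x - c)))
    (Set.mem_Ici.mpr (abs_nonneg (y - c)))
    hs ht hst
  refine le_trans (Real.rpow_le_rpow (abs_nonneg _) ?_ (by linarith)) h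
  simp only [smul_eq_mul]
  calc |s * x + t * y - c| = |s * (x - c) + t * (y - c)| := by
        congr 1
        linear_combination c * hst
    _ ≤ |s * (x - c)| + |t * (y - c)| := abs_add_le _ _
    _ = _ := by rw [abs_mul, abs_mul, abs_of_nonneg hs, abs_of_nonneg ht]

/-- Comparing sampling without replacement to sampling with replacement: for a convex
function `φ`, the average of `φ` of the sum of a uniformly random `k`-element subset of the
`a_i` is at most the average of `φ` of the sum of `k` i.i.d. uniformly chosen entries
(with repetitions allowed).  In particular the same holds for the `p`-th moments about any
point `c`. -/
theorem subset_sum_le_iid_sum_of_convex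
    (d k : ℕ) (hk₁ : 1 ≤ k) (hk₂ : k ≤ d) (a : Fin d → ℝ)
    (φ : ℝ → ℝ) (hφ : ConvexOn ℝ Set.univ φ) :
    (((d.choose k : ℕ) : ℝ))⁻¹ *
        ∑ A ∈ Finset.univ.filter (fun A : Finset (Fin d) => A.card = k),
          φ (∑ i ∈ A, a i) ≤
      (((d : ℝ) ^ k))⁻¹ * ∑ f : Fin k → Fin d, φ (∑ j, a (f j)) ∧
    ∀ p : ℝ, 1 ≤ p → ∀ c : ℝ,
      (((d.choose k : ℕ) : ℝ))⁻¹ *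
          ∑ A ∈ Finset.univ.filter (fun A : Finset (Fin d) => A.card = k),
            |(∑ i ∈ A, a i) - c| ^ p ≤
        (((d : ℝ) ^ k))⁻¹ * ∑ f : Fin k → Fin d, |(∑ j, a (f j)) - c| ^ p := by
  exact ⟨main_ineq d k hk₁ hk₂ a φ hφ, fun p hp c =>
    main_ineq d k hk₁ hk₂ a (fun x => |x - c| ^ p) (convex_abs_pow p hp c)⟩

end KacJL
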